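/- arXiv:0712.3486 — 2 statements merged into one kernel-verified Lean document; each statement's English description precedes it below -/
import Mathlib

section
/- Let N ≥ 1 be an integer and f(z) = ∑_{k≥1} a_k z^{n_k} ∈ H² a lacunary series, where (n_k)_{k≥1} is a Hadamard lacunary sequence and a_k ≠ 0 for every k ≥ 1. Then f is cyclic for S*^N on H² if and only if for every m ≥ 0 and every i ∈ {0, 1, …, N−1} there exists k with n_k ≥ m and n_k ≡ i (mod N). -/
open scoped InnerProductSpace ENNReal
noncomputable section

/-- The Hardy space `H²(𝔻, X)` identified with `ℓ²(ℕ, X)`. -/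
abbrev H2 (X : Type*) [NormedAddCommGroup X] [InnerProductSpace ℂ X] : Type _ :=
  lp (fun _ : ℕ => X) 2

variable {X : Type*} [NormedAddCommGroup X] [InnerProductSpace ℂ X]

/-- The backward shift `S*` on `H²(𝔻, X)`. -/
def bshift (f : H2 X) : H2 X :=
  ⟨fun n => f (n + 1), by
    have h : Summable fun n : ℕ => ‖f n‖ ^ (2 : ℝ≥0∞).toReal :=
      (memℓp_gen_iff (by norm_num)).1 (lp.memℓp f)
    exact memℓp_gen ((summable_nat_add_iff 1).2 h)⟩

/-- `E_F`: the smallest closed `S*`-invariant subspace containing the family `F`. -/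
def EF (F : Set (H2 X)) : Submodule ℂ (H2 X) :=
  (Submodule.span ℂ {g : H2 X | ∃ f ∈ F, ∃ n : ℕ, g = bshift^[n] f}).topologicalClosure

/-- `E_f` for a single function. -/
def Ef (f : H2 X) : Submodule ℂ (H2 X) :=
  EF {f}

/-- `X_*(F) = ⋂_m closed-span {f̂(k) : k ≥ m, f ∈ F}`. -/
def XstarF (F : Set (H2 X)) : Submodule ℂ X :=
  ⨅ m : ℕ, (Submodule.span ℂ {x : X | ∃ f ∈ F, ∃ k ≥ m, x = f k}).topologicalClosure

def Xstar (f : H2 X) : Submodule ℂ X := XstarF {f}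

/-- `P : X → X` is an orthogonal projection: idempotent and self-adjoint. -/
def IsOrthoProj {Y : Type*} [NormedAddCommGroup Y] [InnerProductSpace ℂ Y]
    (P : Y →L[ℂ] Y) : Prop :=
  (∀ x, P (P x) = P x) ∧ ∀ x y, ⟪P x, y⟫_ℂ = ⟪x, P y⟫_ℂ

/-- A sequence in a Hilbert space is completely relatively compact if for every orthogonal
projection `P` the normalized sequence `{P aₖ / ‖P aₖ‖ : P aₖ ≠ 0}` is relatively compact. -/
def CRC {Y : Type*} [NormedAddCommGroup Y] [InnerProductSpace ℂ Y] (a : ℕ → Y) : Prop :=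
  ∀ P : Y →L[ℂ] Y, IsOrthoProj P →
    IsCompact (closure {v : Y | ∃ k, P (a k) ≠ 0 ∧ v = ‖P (a k)‖⁻¹ • P (a k)})

/-- A subset of `ℕ` is Hadamard lacunary. -/
def HadLac (Λ : Set ℕ) : Prop :=
  ∃ d : ℝ, 1 < d ∧ ∀ m ∈ Λ, ∀ n ∈ Λ, m < n → d * m ≤ n

/-- The Fourier spectrum. -/
def spec (f : H2 X) : Set ℕ := {k : ℕ | f k ≠ 0}

/-- `H²(𝔻, Y)` for a subspace `Y ⊆ X`, as a submodule of `H²(𝔻, X)`. -/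
def H2sub (Y : Submodule ℂ X) : Submodule ℂ (H2 X) where
  carrier := {g : H2 X | ∀ n, g n ∈ Y}
  add_mem' := by
    intro a b ha hb n
    have : (↑(a + b) : ∀ _ : ℕ, X) n = a n + b n := by
      rw [lp.coeFn_add]; rfl
    rw [this]
    exact Y.add_mem (ha n) (hb n)
  zero_mem' := by
    intro n
    have : (↑(0 : H2 X) : ∀ _ : ℕ, X) n = 0 := by rw [lp.coeFn_zero]; rfl
    rw [this]
    exact Y.zero_mem
  smul_mem' := by
    intro c a ha n
    have : (↑(c • a) : ∀ _ : ℕ, X) n = c • a n := by rw [lp.coeFn_smul]; rfl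
    rw [this]
    exact Y.smul_mem c (ha n)

/-- A polynomial: finitely many nonzero Taylor coefficients. -/
def PolyH2 (f : H2 X) : Prop := {n : ℕ | f n ≠ 0}.Finite


/-- `X_∞(f)`: the closed span of all closed subspaces `Y ⊆ X` with
`H²(𝔻, Y) ⊆ E_{S*^N f}` for every `N ≥ 0`. -/
def Xinf (f : H2 X) : Submodule ℂ X :=
  (Submodule.span ℂ {x : X | ∃ Y : Submodule ℂ X, IsClosed (Y : Set X) ∧
      (∀ N : ℕ, H2sub Y ≤ Ef (bshift^[N] f)) ∧ x ∈ Y}).topologicalClosure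

/-- The smallest closed `S*^N`-invariant subspace containing `f`;
`f` is cyclic for `S*^N` iff this equals `⊤`. -/
def EfPow (f : H2 X) (N : ℕ) : Submodule ℂ (H2 X) :=
  (Submodule.span ℂ {g : H2 X | ∃ k : ℕ, g = bshift^[N * k] f}).topologicalClosure


/-!
By duality `f` is cyclic for `S*^N` iff no nonzero `g` is orthogonal to every `S*^{Nk} f`. If a
residue class `i` modulo `N` contains no `n_k ≥ m`, then the monomial `z^{Nm+i}` is such a `g`.

Conversely let `g` be orthogonal to every `S*^{Nk} f` and let `a` be the restriction of the
coefficients of `f` to the residue classes which the spectrum of `g` meets. If `g_p ≠ 0` and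
`j ≡ p` is a large element of the spectrum `Λ` of `a`, the gap before `j` in `Λ` exceeds `p`, so
`g_p a_j` is the first nonzero term of the orthogonality relation with `Nk = j - p`, and by
Cauchy–Schwarz `|g_p|² |a_j|² ≤ (∑_{l > j} |a_l|²) * ∑_{s > 0, j + s ∈ Λ} |g_{p+s}|²`.
For fixed `s`, boundedly many `j ∈ Λ` have `j + s ∈ Λ`, so the last factor is summable over
`j ∈ Λ`, and hence so is `|a_j|² / ∑_{l > j} |a_l|²`. By the Abel–Dini theorem this forces `a` to
be finitely supported.
-/

open Filter Set
open scoped ComplexConjugate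

lemma exists_finset_transversal {α β : Type*} {s : Set α} {φ : α → β} (hs : (φ '' s).Finite) :
    ∃ P : Finset α, (∀ p ∈ P, p ∈ s) ∧ ∀ x ∈ s, ∃ p ∈ P, φ p = φ x := by
  obtain ⟨t, hts, ht⟩ := exists_subset_bijOn s φ
  have htfin : t.Finite := ht.finite_iff_finite.2 hs
  refine ⟨htfin.toFinset, fun p hp ↦ hts (htfin.mem_toFinset.1 hp), fun x hx ↦ ?_⟩
  obtain ⟨p, hp, hpx⟩ := ht.surjOn (mem_image_of_mem φ hx)
  exact ⟨p, htfin.mem_toFinset.2 hp, hpx⟩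

section Lacunary

/-- The positive integers are differences of two elements of `Λ` in a uniformly bounded number of
ways. Lacunary sets and Sidon sets are examples. As a condition on a spectrum it controls the
correlations between a function and its shifts. -/
def HasBddDifferenceMultiplicity (Λ : Set ℕ) : Prop :=
  ∃ C : ℕ, ∀ s, 0 < s → {j | j ∈ Λ ∧ j + s ∈ Λ}.encard ≤ C

variable {Λ Λ' : Set ℕ}

lemma HasBddDifferenceMultiplicity.mono (h : HasBddDifferenceMultiplicity Λ) (hsub : Λ' ⊆ Λ) :
    HasBddDifferenceMultiplicity Λ' := by
  obtain ⟨C, hC⟩ := h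
  refine ⟨C, fun s hs ↦ le_trans (encard_le_encard ?_) (hC s hs)⟩
  exact fun j hj ↦ ⟨hsub hj.1, hsub hj.2⟩

lemma HasBddDifferenceMultiplicity.eventually_add_lt (h : HasBddDifferenceMultiplicity Λ) (p : ℕ) :
    ∀ᶠ j in atTop, j ∈ Λ → ∀ i ∈ Λ, i < j → i + p < j := by
  obtain ⟨C, hC⟩ := h
  have hfin : (⋃ s ∈ Set.Icc 1 p, (· + s) '' {i | i ∈ Λ ∧ i + s ∈ Λ}).Finite :=
    (finite_Icc 1 p).biUnion fun s hs ↦ (finite_of_encard_le_coe (hC s hs.1)).image _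
  rw [← Nat.cofinite_eq_atTop]
  filter_upwards [hfin.compl_mem_cofinite] with j hj hjΛ i hi hij
  by_contra! hle
  obtain ⟨s, rfl⟩ := Nat.exists_eq_add_of_lt hij
  exact hj (mem_biUnion (x := s + 1) ⟨by lia, by lia⟩ ⟨i, ⟨hi, hjΛ⟩, rfl⟩)

lemma HadLac.exists_encard_inter_Icc_mul_le (h : HadLac Λ) (K : ℝ) :
    ∃ C : ℕ, ∀ x : ℝ, 0 < x → {m ∈ Λ | x ≤ m ∧ m ≤ K * x}.encard ≤ C := by
  obtain ⟨d, hd, hΛ⟩ := h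
  refine ⟨⌊Real.logb d K⌋₊ + 1, fun x hx ↦ ?_⟩
  let level : ℕ → ℕ := fun m ↦ ⌊Real.logb d (m / x)⌋₊
  have level_lt {m n : ℕ} (hm : m ∈ Λ) (hn : n ∈ Λ) (hxm : x ≤ m) (hmn : m < n) :
      level m < level n := by
    have hmx : 0 < m / x := div_pos (hx.trans_le hxm) hx
    have hlog : Real.logb d (m / x) + 1 ≤ Real.logb d (n / x) := by
      rw [← Real.logb_self_eq_one hd, ← Real.logb_mul hmx.ne' (by positivity)]
      refine Real.logb_le_logb_of_le hd (by positivity) ?_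
      rw [div_mul_eq_mul_div, mul_comm]
      gcongr
      exact hΛ m hm n hn hmn
    have hlog_nonneg : 0 ≤ Real.logb d (m / x) := Real.logb_nonneg hd ((one_le_div hx).2 hxm)
    rw [Nat.lt_iff_add_one_le, ← Nat.floor_add_one hlog_nonneg]
    exact Nat.floor_le_floor hlog
  have hinj : InjOn level {m ∈ Λ | x ≤ m ∧ m ≤ K * x} := by
    rintro m ⟨hm, hxm, -⟩ n ⟨hn, hxn, -⟩ hmn
    rcases lt_trichotomy m n with hlt | heq | hgt
    · exact absurd hmn (level_lt hm hn hxm hlt).ne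
    · exact heq
    · exact absurd hmn (level_lt hn hm hxn hgt).ne'
  have hmaps : MapsTo level {m ∈ Λ | x ≤ m ∧ m ≤ K * x} (Finset.range (⌊Real.logb d K⌋₊ + 1)) := by
    rintro m ⟨-, hxm, hmK⟩
    simp only [Finset.coe_range, mem_Iio, Nat.lt_succ_iff]
    exact Nat.floor_le_floor <| Real.logb_le_logb_of_le hd (div_pos (hx.trans_le hxm) hx)
      ((div_le_iff₀ hx).2 hmK)
  exact (encard_le_encard_of_injOn hmaps hinj).trans_eq (by rw [encard_coe_eq_coe_finsetCard,
    Finset.card_range])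

lemma HadLac.hasBddDifferenceMultiplicity (h : HadLac Λ) : HasBddDifferenceMultiplicity Λ := by
  have ⟨d, hd, hΛ⟩ := h
  obtain ⟨C, hC⟩ := h.exists_encard_inter_Icc_mul_le (d / (d - 1))
  refine ⟨C, fun s hs ↦ le_trans ?_ (hC s (by positivity))⟩
  refine encard_le_encard_of_injOn (f := (· + s)) ?_ (add_left_injective s).injOn
  rintro j ⟨hj, hjs⟩
  have hlac : d * j ≤ (j + s : ℕ) := hΛ j hj _ hjs (by lia)
  refine ⟨hjs, by simp, ?_⟩
  rw [div_mul_eq_mul_div, le_div_iff₀ (by linarith)]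
  push_cast at hlac ⊢
  linarith

lemma hadLac_range {n : ℕ → ℕ} {d : ℝ} (hd : 1 < d) (hn : StrictMono n)
    (hlac : ∀ k, d * n k ≤ n (k + 1)) : HadLac (range n) := by
  refine ⟨d, hd, ?_⟩
  rintro _ ⟨k, rfl⟩ _ ⟨l, rfl⟩ hkl
  exact (hlac k).trans (mod_cast hn.monotone (hn.lt_iff_lt.1 hkl))

end Lacunary

section Series

/-- A form of the Abel–Dini theorem. -/
lemma finite_support_of_eventually_div_tail_le {b c : ℕ → ℝ≥0∞} (hb : ∑' j, b j ≠ ∞)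
    (hc : ∑' j, c j ≠ ∞) (hbc : ∀ᶠ j in atTop, b j / ∑' s, b (j + (s + 1)) ≤ c j) :
    b.support.Finite := by
  by_contra hinf
  let R : ℕ → ℝ≥0∞ := fun j ↦ ∑' s, b (j + (s + 1))
  obtain ⟨M, hM⟩ := eventually_atTop.1 hbc
  obtain ⟨L, hcL⟩ := eventually_atTop.1
    ((ENNReal.tendsto_sum_nat_add c hc).eventually_lt_const one_pos)
  let m := max M L
  have hR_anti (s : ℕ) : R (m + (s + 1)) ≤ R m := by
    simpa only [R, add_assoc] using ENNReal.tsum_comp_le_tsum_of_injective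
      (add_right_injective (s + 1)) fun t ↦ b (m + (t + 1))
  have hR_ne_zero : R m ≠ 0 := by
    obtain ⟨j, hj, hmj⟩ := Infinite.exists_gt hinf m
    obtain ⟨s, rfl⟩ := Nat.exists_eq_add_of_lt hmj
    exact fun hR ↦ hj (ENNReal.tsum_eq_zero.1 hR s)
  have hR_ne_top : R m ≠ ∞ := ne_top_of_le_ne_top hb <|
    ENNReal.tsum_comp_le_tsum_of_injective (fun s t hst ↦ by simpa using hst) b
  have : (1 : ℝ≥0∞) < 1 := calc
    1 = ∑' s, b (m + (s + 1)) / R m := by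
      simp only [div_eq_mul_inv, ENNReal.tsum_mul_right]
      exact (ENNReal.mul_inv_cancel hR_ne_zero hR_ne_top).symm
    _ ≤ ∑' s, b (m + (s + 1)) / R (m + (s + 1)) := by gcongr with s; exact hR_anti s
    _ ≤ ∑' s, c (s + (m + 1)) := ENNReal.tsum_le_tsum fun s ↦ by
      rw [show s + (m + 1) = m + (s + 1) by ring]
      exact hM _ (by lia)
    _ < 1 := hcL _ (by lia)
  exact this.false

lemma sq_tsum_mul_le_tsum_sq_mul_tsum_sq {ι : Type*} (u v : ι → ℝ≥0∞) :
    (∑' i, u i * v i) ^ 2 ≤ (∑' i, u i ^ 2) * ∑' i, v i ^ 2 := by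
  let _ : MeasurableSpace ι := ⊤
  have holder := ENNReal.lintegral_mul_le_Lp_mul_Lq (.count : MeasureTheory.Measure ι)
    Real.HolderConjugate.two_two (f := u) (g := v) measurable_from_top.aemeasurable
    measurable_from_top.aemeasurable
  simp only [MeasureTheory.lintegral_count, Pi.mul_apply, ENNReal.rpow_two, one_div] at holder
  rw [← ENNReal.mul_rpow_of_nonneg _ _ (by norm_num), ENNReal.le_rpow_inv_iff two_pos,
    ENNReal.rpow_two] at holder
  exact holder

/-- The sum of `w s` over all `s` with `j` and `j + s + 1` in `Λ`. The shift by one makes the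
positive differences from `j` range over all of `ℕ`. -/
def differenceWeight (Λ : Set ℕ) (w : ℕ → ℝ≥0∞) (j : ℕ) : ℝ≥0∞ :=
  ∑' s, {s | j ∈ Λ ∧ j + (s + 1) ∈ Λ}.indicator w s

lemma HasBddDifferenceMultiplicity.tsum_differenceWeight_ne_top {Λ : Set ℕ}
    (h : HasBddDifferenceMultiplicity Λ) {w : ℕ → ℝ≥0∞} (hw : ∑' s, w s ≠ ∞) :
    ∑' j, differenceWeight Λ w j ≠ ∞ := by
  obtain ⟨C, hC⟩ := h
  have count (s : ℕ) : ∑' j, {s | j ∈ Λ ∧ j + (s + 1) ∈ Λ}.indicator w s =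
      {j | j ∈ Λ ∧ j + (s + 1) ∈ Λ}.encard * w s := by
    rw [← ENNReal.tsum_set_const, tsum_subtype _ fun _ ↦ w s]
    rfl
  have hle : ∑' j, differenceWeight Λ w j ≤ C * ∑' s, w s := by
    simp only [differenceWeight]
    rw [ENNReal.tsum_comm, ← ENNReal.tsum_mul_left]
    refine ENNReal.tsum_le_tsum fun s ↦ ?_
    rw [count]
    gcongr
    exact_mod_cast hC (s + 1) s.succ_pos
  exact ne_top_of_le_ne_top (ENNReal.mul_ne_top (ENNReal.natCast_ne_top C) hw) hle

end Series

section Orthogonality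

lemma enorm_le_tsum_enorm_of_hasSum_zero {E : Type*} [NormedAddCommGroup E] {u : ℕ → E}
    (hu : HasSum u 0) {p : ℕ} (hp : ∀ i < p, u i = 0) : ‖u p‖ₑ ≤ ∑' s, ‖u (p + (s + 1))‖ₑ := by
  have hhead : ∑ i ∈ Finset.range (p + 1), u i = u p := by
    rw [Finset.sum_range_succ, Finset.sum_eq_zero fun i hi ↦ hp i (Finset.mem_range.1 hi), zero_add]
  have htail : HasSum (fun s ↦ u (s + (p + 1))) (-u p) := by
    rw [← zero_sub, ← hhead]
    exact (hasSum_nat_add_iff' (p + 1)).2 hu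
  rw [← enorm_neg, ← htail.tsum_eq]
  simp only [add_left_comm _ p]
  exact enorm_tsum_le_tsum_enorm

variable {𝕜 : Type*} [NonUnitalNormedRing 𝕜] [NormMulClass 𝕜] {a g : ℕ → 𝕜}

lemma enorm_sq_div_tail_le_differenceWeight_div {p k : ℕ} (hgp : g p ≠ 0)
    (hak : a (p + k) ≠ 0) (ha : ∀ i < p, a (i + k) = 0)
    (h : HasSum (fun i ↦ g i * a (i + k)) 0) :
    ‖a (p + k)‖ₑ ^ 2 / ∑' s, ‖a (p + k + (s + 1))‖ₑ ^ 2 ≤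
      differenceWeight a.support (fun s ↦ ‖g (p + (s + 1))‖ₑ ^ 2) (p + k) / ‖g p‖ₑ ^ 2 := by
  let v : ℕ → ℝ≥0∞ :=
    {s | p + k + (s + 1) ∈ a.support}.indicator fun s ↦ ‖g (p + (s + 1))‖ₑ
  have hbound : ‖g p‖ₑ * ‖a (p + k)‖ₑ ≤ ∑' s, ‖a (p + k + (s + 1))‖ₑ * v s := by
    have := enorm_le_tsum_enorm_of_hasSum_zero h fun i hi ↦ by rw [ha i hi, mul_zero]
    simp only [enorm_mul] at this
    refine this.trans_eq (tsum_congr fun s ↦ ?_)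
    rw [add_right_comm p (s + 1) k, mul_comm]
    by_cases hs : a (p + k + (s + 1)) = 0 <;> simp [v, hs]
  have hv : ∑' s, v s ^ 2 =
      differenceWeight a.support (fun s ↦ ‖g (p + (s + 1))‖ₑ ^ 2) (p + k) := by
    refine tsum_congr fun s ↦ ?_
    by_cases hs : a (p + k + (s + 1)) = 0 <;> simp [v, hs, hak]
  refine ENNReal.div_le_of_le_mul ?_
  rw [div_eq_mul_inv, mul_right_comm, ← div_eq_mul_inv, ENNReal.le_div_iff_mul_le (by simp [hgp])
    (by simp)]
  calc ‖a (p + k)‖ₑ ^ 2 * ‖g p‖ₑ ^ 2 = (‖g p‖ₑ * ‖a (p + k)‖ₑ) ^ 2 := by ring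
    _ ≤ (∑' s, ‖a (p + k + (s + 1))‖ₑ * v s) ^ 2 := by gcongr
    _ ≤ (∑' s, ‖a (p + k + (s + 1))‖ₑ ^ 2) * ∑' s, v s ^ 2 :=
      sq_tsum_mul_le_tsum_sq_mul_tsum_sq _ _
    _ = _ := by rw [hv, mul_comm]

lemma finite_support_of_hasSum_mul_shift_zero (ha : ∑' j, ‖a j‖ₑ ^ 2 ≠ ∞)
    (hg : ∑' j, ‖g j‖ₑ ^ 2 ≠ ∞) (hΛ : HasBddDifferenceMultiplicity a.support) {P : Finset ℕ}
    (hP : ∀ p ∈ P, g p ≠ 0)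
    (h : ∀ᶠ j in atTop, a j ≠ 0 →
      ∃ p ∈ P, ∃ k, p + k = j ∧ HasSum (fun i ↦ g i * a (i + k)) 0) :
    a.support.Finite := by
  let c : ℕ → ℕ → ℝ≥0∞ := fun p j ↦
    differenceWeight a.support (fun s ↦ ‖g (p + (s + 1))‖ₑ ^ 2) j / ‖g p‖ₑ ^ 2
  have hc : ∑' j, ∑ p ∈ P, c p j ≠ ∞ := by
    rw [Summable.tsum_finsetSum fun _ _ ↦ ENNReal.summable, ENNReal.sum_ne_top]
    intro p hp
    simp only [c, div_eq_mul_inv, ENNReal.tsum_mul_right]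
    refine ENNReal.mul_ne_top (hΛ.tsum_differenceWeight_ne_top ?_) (by simp [hP p hp])
    exact ne_top_of_le_ne_top hg <|
      ENNReal.tsum_comp_le_tsum_of_injective (fun s t hst ↦ by simpa using hst) _
  have hdiv : ∀ᶠ j in atTop,
      ‖a j‖ₑ ^ 2 / ∑' s, ‖a (j + (s + 1))‖ₑ ^ 2 ≤ ∑ p ∈ P, c p j := by
    have hgap := (eventually_all_finset P).2 fun p _ ↦ hΛ.eventually_add_lt p
    filter_upwards [h, hgap] with j hj hgapj
    by_cases haj : a j = 0
    · simp [haj]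
    obtain ⟨p, hp, k, rfl, hsum⟩ := hj haj
    have hvanish : ∀ i < p, a (i + k) = 0 := fun i hi ↦ by
      by_contra hik
      have := hgapj p hp haj (i + k) hik (by lia)
      lia
    exact (enorm_sq_div_tail_le_differenceWeight_div (hP p hp) haj hvanish hsum).trans
      (Finset.single_le_sum (f := (c · (p + k))) (fun _ _ ↦ zero_le) hp)
  simpa [Function.support] using finite_support_of_eventually_div_tail_le ha hc hdiv

end Orthogonality

section Hardy

lemma bshift_iterate_apply (f : H2 X) (k j : ℕ) : (bshift^[k] f) j = f (j + k) := by
  induction k generalizing f with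
  | zero => rfl
  | succ k ih => rw [Function.iterate_succ_apply, ih]; rfl

lemma tsum_enorm_sq_ne_top {ι : Type*} {E : ι → Type*} [∀ i, NormedAddCommGroup (E i)]
    (f : lp E 2) : ∑' i, ‖f i‖ₑ ^ 2 ≠ ∞ := by
  have hf : Summable fun i ↦ ‖‖f i‖ ^ 2‖ := by
    simpa using (memℓp_gen_iff (by norm_num)).1 (lp.memℓp f)
  simpa [enorm_pow] using tsum_enorm_ne_top_iff_summable_norm.2 hf

lemma efPow_eq_top_iff [CompleteSpace X] (f : H2 X) (N : ℕ) :
    EfPow f N = ⊤ ↔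
      ∀ g : H2 X, (∀ k, HasSum (fun i ↦ ⟪f (i + N * k), g i⟫_ℂ) 0) → g = 0 := by
  have inner_eq_zero_iff (g : H2 X) (k : ℕ) :
      ⟪bshift^[N * k] f, g⟫_ℂ = 0 ↔ HasSum (fun i ↦ ⟪f (i + N * k), g i⟫_ℂ) 0 := by
    have hsum := lp.hasSum_inner (𝕜 := ℂ) (bshift^[N * k] f) g
    simp only [bshift_iterate_apply] at hsum
    exact ⟨fun h ↦ h ▸ hsum, hsum.unique⟩
  rw [EfPow, Submodule.topologicalClosure_eq_top_iff, Submodule.eq_bot_iff]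
  refine forall_congr' fun g ↦ imp_congr_left ?_
  rw [← Submodule.span_singleton_le_iff_mem, ← Submodule.isOrtho_iff_le, Submodule.isOrtho_comm,
    Submodule.isOrtho_span]
  simp [inner_eq_zero_iff]

variable {N : ℕ} {f : H2 ℂ}

lemma exists_mem_spec_of_efPow_eq_top (h : EfPow f N = ⊤) (m : ℕ) {i : ℕ} (hi : i < N) :
    ∃ k ∈ spec f, m ≤ k ∧ k % N = i := by
  by_contra! hcon
  have hf (k : ℕ) : f (N * m + i + N * k) = 0 := by
    by_contra hk
    refine hcon _ hk (by nlinarith) ?_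
    rw [add_right_comm, ← mul_add, Nat.mul_add_mod, Nat.mod_eq_of_lt hi]
  have hzero := (efPow_eq_top_iff f N).1 h (lp.single 2 (N * m + i) 1) fun k ↦ by
    convert hasSum_zero with j
    by_cases hj : j = N * m + i
    · simp [hj, hf]
    · simp [hj]
  simpa using congrArg (fun g : H2 ℂ ↦ g (N * m + i)) hzero

lemma finite_mem_spec_mod_eq_of_orthogonal (hN : 1 ≤ N)
    (hΛ : HasBddDifferenceMultiplicity (spec f)) {g : H2 ℂ}
    (hg : ∀ k, HasSum (fun i ↦ ⟪f (i + N * k), g i⟫_ℂ) 0) {q : ℕ} (hq : g q ≠ 0) :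
    {j ∈ spec f | j % N = q % N}.Finite := by
  let A : Set ℕ := {j | ∃ p, g p ≠ 0 ∧ p % N = j % N}
  let a : ℕ → ℂ := A.indicator fun j ↦ conj (f j)
  have ha_support : a.support = A ∩ spec f := by
    ext j
    simp [a, spec]
  have ha : ∑' j, ‖a j‖ₑ ^ 2 ≠ ∞ := by
    refine ne_top_of_le_ne_top (tsum_enorm_sq_ne_top f) (ENNReal.tsum_le_tsum fun j ↦ ?_)
    by_cases hj : j ∈ A <;> simp [a, hj]
  have horth (k : ℕ) : HasSum (fun i ↦ g i * a (i + N * k)) 0 := by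
    convert hg k using 2 with i
    by_cases hi : g i = 0
    · simp [hi]
    · have hiA : i + N * k ∈ A := ⟨i, hi, by simp⟩
      simp [a, hiA, RCLike.inner_apply]
  have hres : ((· % N) '' {p | g p ≠ 0}).Finite :=
    (finite_Iio N).subset (image_subset_iff.2 fun p _ ↦ Nat.mod_lt p hN)
  obtain ⟨P, hP, hPres⟩ := exists_finset_transversal hres
  have hfin : a.support.Finite := by
    refine finite_support_of_hasSum_mul_shift_zero ha (tsum_enorm_sq_ne_top g)
      (hΛ.mono (ha_support ▸ inter_subset_right)) hP ?_
    filter_upwards [(eventually_all_finset P).2 fun p _ ↦ eventually_ge_atTop p] with j hPj haj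
    obtain ⟨r, hr, hrj⟩ : j ∈ A := mem_of_indicator_ne_zero haj
    obtain ⟨p, hp, hpr⟩ := hPres r hr
    obtain ⟨k, hk⟩ := (Nat.modEq_iff_dvd' (hPj p hp)).1 (hpr.trans hrj)
    exact ⟨p, hp, N * k, by have := hPj p hp; lia, horth k⟩
  exact hfin.subset fun j ⟨hj, hjq⟩ ↦ ha_support ▸ ⟨⟨q, hq, hjq.symm⟩, hj⟩

lemma efPow_eq_top_of_forall_exists_mem_spec (hN : 1 ≤ N)
    (hΛ : HasBddDifferenceMultiplicity (spec f))
    (h : ∀ m, ∀ i < N, ∃ k ∈ spec f, m ≤ k ∧ k % N = i) : EfPow f N = ⊤ := by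
  refine (efPow_eq_top_iff f N).2 fun g hg ↦ lp.ext (funext fun q ↦ ?_)
  by_contra hq
  refine infinite_of_forall_exists_gt (fun m ↦ ?_)
    (finite_mem_spec_mod_eq_of_orthogonal hN hΛ hg hq)
  obtain ⟨k, hk, hmk, hkq⟩ := h (m + 1) (q % N) (Nat.mod_lt q hN)
  exact ⟨k, ⟨hk, hkq⟩, hmk⟩

theorem scalar_lacunary_cyclic_pow_iff_general (hN : 1 ≤ N)
    (hΛ : HasBddDifferenceMultiplicity (spec f)) :
    EfPow f N = ⊤ ↔ ∀ m, ∀ i < N, ∃ k ∈ spec f, m ≤ k ∧ k % N = i :=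
  ⟨fun h m _ hi ↦ exists_mem_spec_of_efPow_eq_top h m hi,
    efPow_eq_top_of_forall_exists_mem_spec hN hΛ⟩

end Hardy

/-- A scalar lacunary series with all coefficients nonzero is cyclic for `S*^N` iff beyond any
`m` the spectrum meets every residue class modulo `N`. -/
theorem scalar_lacunary_cyclic_pow_iff
    (N : ℕ) (hN : 1 ≤ N)
    (n : ℕ → ℕ) (d : ℝ) (hd : 1 < d) (hmono : StrictMono n)
    (hlac : ∀ k, d * n k ≤ n (k + 1))
    (f : H2 ℂ) (hspec : spec f = Set.range n) :
    EfPow f N = ⊤ ↔ ∀ m : ℕ, ∀ i < N, ∃ k : ℕ, m ≤ n k ∧ n k % N = i := by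
  simpa [hspec] using scalar_lacunary_cyclic_pow_iff_general hN (f := f)
    (hspec ▸ (hadLac_range hd hmono hlac).hasBddDifferenceMultiplicity)

end
end

section
/- Let X be a separable Hilbert space, Λ = {n_k : k ≥ 1} an infinite Hadamard lacunary set, and m_1, …, m_d fixed integers. Let f = (f_1, …, f_d) ∈ H²(𝔻, X^d), where X^d is the d-fold Hilbert direct sum of X, and suppose σ(f_i) ⊆ (Λ + m_i) ∩ ℕ for each 1 ≤ i ≤ d. Suppose the sequence of vectors v_k = (f̂_1(n_k + m_1), f̂_2(n_k + m_2), …, f̂_d(n_k + m_d)) ∈ X^d, k ≥ 1, is completely relatively compact in X^d. Then f is cyclic for the backward shift on H²(𝔻, X^d) if and only if for every N ≥ 1 the closed linear span of {v_k : k ≥ N} equals X^d. -/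
open scoped InnerProductSpace ENNReal
noncomputable section

variable {X : Type*} [NormedAddCommGroup X] [InnerProductSpace ℂ X]

/-!
Realign the coordinates: put `F p = (f̂₁(p + m₁), …, f̂_d(p + m_d))` for `p : ℤ`, so that `F` lives
on `{nₖ}` with `F nₖ = vₖ`, and likewise `G` for `g`. Then `g ⟂ S*ˡ f` for all `l` says
`∑ⱼ ⟪vⱼ, G (nⱼ - l)⟫ = 0` for all `l`.

If the `vₖ` with `k ≥ N` are orthogonal to `y ≠ 0`, any `g` whose realignment is `y` at a single
place `M > n₀, …, n_{N-1}` is orthogonal to every `S*ˡ f`.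

Conversely let `g` be orthogonal to every `S*ˡ f` and take `l = nₖ - p`. Since gaps tend to infinity
and `G` vanishes far to the left, the terms `j < k` disappear for large `k`, so `⟪vₖ, G p⟫` is the
negative of a sum over `j > k`. Let `bₖ` be the projection of `vₖ` on the closed span of the
values of `G`. Complete relative compactness bounds `‖bₖ‖²` by finitely many `|⟪bₖ, G p⟫|²`, hence,
by Cauchy–Schwarz, by `Sₖ · ∑_{j > k} ‖bⱼ‖²`. The weights `Sₖ` are summable because each integer is
a difference `nⱼ - nₖ` boundedly often, and this forces `bₖ = 0` for large `k`. Thus each `G p` is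
orthogonal to a tail of `(vₖ)`, and `G = 0`.
-/

open Filter Set

section Orthogonality

variable {𝕜 Y : Type*} [RCLike 𝕜] [NormedAddCommGroup Y] [InnerProductSpace 𝕜 Y]

lemma mem_orthogonal_span_iff {s : Set Y} {y : Y} :
    y ∈ (Submodule.span 𝕜 s)ᗮ ↔ ∀ x ∈ s, ⟪x, y⟫_𝕜 = 0 := by
  refine ⟨fun hy x hx => hy x (Submodule.subset_span hx), fun h => ?_⟩
  have hle : Submodule.span 𝕜 s ≤ (Submodule.span 𝕜 {y})ᗮ := Submodule.span_le.2 fun x hx =>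
    Submodule.mem_orthogonal_singleton_iff_inner_left.2 (h x hx)
  exact fun x hx => Submodule.mem_orthogonal_singleton_iff_inner_left.1 (hle hx)

lemma topologicalClosure_span_eq_top_iff [CompleteSpace Y] {s : Set Y} :
    (Submodule.span 𝕜 s).topologicalClosure = ⊤ ↔ ∀ y, (∀ x ∈ s, ⟪x, y⟫_𝕜 = 0) → y = 0 := by
  simp only [Submodule.topologicalClosure_eq_top_iff, Submodule.eq_bot_iff,
    mem_orthogonal_span_iff]

end Orthogonality

section SquareSummable

variable {ι 𝕜 Y : Type*} [RCLike 𝕜] [NormedAddCommGroup Y]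

lemma memℓp_two_iff_summable_norm_sq {E : ι → Type*} [∀ i, NormedAddCommGroup (E i)]
    {a : ∀ i, E i} : Memℓp a 2 ↔ Summable fun i => ‖a i‖ ^ 2 := by
  simp [memℓp_gen_iff]

variable [InnerProductSpace 𝕜 Y]

lemma norm_tsum_inner_sq_le {a b : ι → Y} (ha : Summable fun i => ‖a i‖ ^ 2)
    (hb : Summable fun i => ‖b i‖ ^ 2) :
    ‖∑' i, ⟪a i, b i⟫_𝕜‖ ^ 2 ≤ (∑' i, ‖a i‖ ^ 2) * ∑' i, ‖b i‖ ^ 2 := by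
  let A : lp (fun _ : ι => Y) 2 := ⟨a, memℓp_two_iff_summable_norm_sq.2 ha⟩
  let B : lp (fun _ : ι => Y) 2 := ⟨b, memℓp_two_iff_summable_norm_sq.2 hb⟩
  have norm_sq (C : lp (fun _ : ι => Y) 2) : ‖C‖ ^ 2 = ∑' i, ‖C i‖ ^ 2 := by
    simpa using lp.norm_rpow_eq_tsum (p := 2) (by norm_num) C
  calc ‖∑' i, ⟪a i, b i⟫_𝕜‖ ^ 2 = ‖⟪A, B⟫_𝕜‖ ^ 2 := by rw [lp.inner_eq_tsum]
    _ ≤ (‖A‖ * ‖B‖) ^ 2 := by gcongr; exact norm_inner_le_norm A B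
    _ = (∑' i, ‖a i‖ ^ 2) * ∑' i, ‖b i‖ ^ 2 := by rw [mul_pow, norm_sq, norm_sq]

end SquareSummable

section DifferenceMultiplicity

/-- Every integer is a difference `n j - n k` with `k < j` for at most `L` pairs, for some `L`
independent of the integer. This is how the sparsity of a lacunary sequence enters the convolution
estimates. -/
def HasBoundedDifferenceMultiplicity (n : ℕ → ℕ) : Prop :=
  ∃ L : ℕ, ∀ q : ℤ, {x : ℕ × ℕ | x.1 < x.2 ∧ (n x.2 : ℤ) - n x.1 = q}.encard ≤ L

variable {n : ℕ → ℕ}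

lemma lt_add_of_lacunary_of_sub_eq_sub {c : ℝ} (hc : 1 < c) (hmono : StrictMono n)
    (hlac : ∀ k, c * n k ≤ n (k + 1)) {L : ℕ} (hL : c / (c - 1) < c ^ L) {k j k' j' : ℕ}
    (hkj : k < j) (hkj' : k' < j') (h : (n j : ℤ) - n k = n j' - n k') : j' < j + L := by
  by_contra! hj'
  have hc1 : 0 < c - 1 := sub_pos.2 hc
  have hpow : c ^ L * n j ≤ n j' :=
    (geom_le (u := fun r => (n (j + r) : ℝ)) (by positivity) L fun r _ => hlac (j + r)).trans
      (by exact_mod_cast hmono.monotone hj')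
  have hk' : c * n k' ≤ n j' := (hlac k').trans (by exact_mod_cast hmono.monotone hkj')
  have hsub : (n j : ℝ) - n k = n j' - n k' := by exact_mod_cast h
  have hj : (0 : ℝ) < n j := by exact_mod_cast (Nat.zero_le _).trans_lt (hmono hkj)
  have : c * n j < c * n j := calc
    c * n j < (c ^ L * (c - 1)) * n j := by gcongr; exact (div_lt_iff₀ hc1).1 hL
    _ = (c - 1) * (c ^ L * n j) := by ring
    _ ≤ (c - 1) * n j' := by gcongr
    _ ≤ c * (n j' - n k') := by linarith
    _ = c * (n j - n k) := by rw [hsub]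
    _ ≤ c * n j := by gcongr; simp
  exact this.false

lemma hasBoundedDifferenceMultiplicity_of_lacunary {c : ℝ} (hc : 1 < c) (hmono : StrictMono n)
    (hlac : ∀ k, c * n k ≤ n (k + 1)) : HasBoundedDifferenceMultiplicity n := by
  obtain ⟨L, hL⟩ := pow_unbounded_of_one_lt (c / (c - 1)) hc
  refine ⟨L, fun q => ?_⟩
  set s := {x : ℕ × ℕ | x.1 < x.2 ∧ (n x.2 : ℤ) - n x.1 = q}
  have hwindow {x y : ℕ × ℕ} (hx : x ∈ s) (hy : y ∈ s) : y.2 < x.2 + L :=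
    lt_add_of_lacunary_of_sub_eq_sub hc hmono hlac hL hx.1 hy.1 (hx.2.trans hy.2.symm)
  have hmaps : MapsTo (fun x : ℕ × ℕ => x.2 % L) s (Finset.range L) := fun x hx =>
    Finset.mem_coe.2 (Finset.mem_range.2 (Nat.mod_lt _ (by have := hwindow hx hx; omega)))
  have hinj : InjOn (fun x : ℕ × ℕ => x.2 % L) s := by
    intro x hx y hy hxy
    have h2 : x.2 = y.2 := Nat.ModEq.eq_of_abs_lt hxy (by
      have := hwindow hx hy
      have := hwindow hy hx
      rw [abs_lt]
      omega)
    have h1 : n x.1 = n y.1 := by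
      have := hx.2.trans hy.2.symm
      rw [h2] at this
      omega
    exact Prod.ext (hmono.injective h1) h2
  simpa only [encard_coe_eq_coe_finsetCard, Finset.card_range] using
    encard_le_encard_of_injOn hmaps hinj

lemma HasBoundedDifferenceMultiplicity.eventually_forall_lt_add_le
    (hn : HasBoundedDifferenceMultiplicity n) (hmono : StrictMono n) (B : ℕ) :
    ∀ᶠ k in atTop, ∀ j < k, n j + B ≤ n k := by
  obtain ⟨L, hL⟩ := hn
  have hfin : {x : ℕ × ℕ | x.1 < x.2 ∧ n x.2 < n x.1 + B}.Finite := by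
    refine ((finite_Ico (0 : ℤ) B).biUnion fun q _ =>
      finite_of_encard_le_coe (hL q)).subset fun x ⟨hlt, hB⟩ => ?_
    have := hmono hlt
    exact mem_biUnion (x := (n x.2 : ℤ) - n x.1) (mem_Ico.2 (by omega)) ⟨hlt, rfl⟩
  have hnotMem := (hfin.image Prod.snd).eventually_cofinite_notMem
  rw [Nat.cofinite_eq_atTop] at hnotMem
  filter_upwards [hnotMem] with k hk j hj
  by_contra! hB
  exact hk ⟨(j, k), ⟨hj, hB⟩, rfl⟩

lemma summable_comp_of_encard_preimage_le {α β : Type*} {φ : α → β} {L : ℕ}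
    (hφ : ∀ b, (φ ⁻¹' {b}).encard ≤ L) {u : β → ℝ} (hu0 : 0 ≤ u) (hu : Summable u) :
    Summable (u ∘ φ) := by
  classical
  refine summable_of_sum_le (fun a => hu0 (φ a)) (c := L * ∑' b, u b) fun s => ?_
  have hcard (b : β) : (s.filter (φ · = b)).card ≤ L := by
    have : ((s.filter (φ · = b) : Finset α) : Set α).encard ≤ L :=
      (encard_le_encard fun a ha => (Finset.mem_filter.1 ha).2).trans (hφ b)
    simpa only [encard_coe_eq_coe_finsetCard, Nat.cast_le] using this
  calc ∑ a ∈ s, u (φ a) = ∑ b ∈ s.image φ, (s.filter (φ · = b)).card • u b := Finset.sum_comp u φ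
    _ ≤ ∑ b ∈ s.image φ, L * u b := Finset.sum_le_sum fun b _ => by
      rw [nsmul_eq_mul]
      exact mul_le_mul_of_nonneg_right (by exact_mod_cast hcard b) (hu0 b)
    _ = L * ∑ b ∈ s.image φ, u b := (Finset.mul_sum _ _ _).symm
    _ ≤ L * ∑' b, u b := by gcongr; exact hu.sum_le_tsum _ fun b _ => hu0 b

lemma HasBoundedDifferenceMultiplicity.summable_comp_sub_add
    (hn : HasBoundedDifferenceMultiplicity n) {u : ℤ → ℝ} (hu0 : 0 ≤ u) (hu : Summable u) (p : ℤ) :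
    Summable fun x : ℕ × ℕ => u (n (x.2 + (x.1 + 1)) - n x.1 + p) := by
  obtain ⟨L, hL⟩ := hn
  refine summable_comp_of_encard_preimage_le (L := L)
    (φ := fun x : ℕ × ℕ => (n (x.2 + (x.1 + 1)) : ℤ) - n x.1 + p) (fun q => ?_) hu0 hu
  refine (encard_le_encard_of_injOn (f := fun x : ℕ × ℕ => (x.1, x.2 + (x.1 + 1))) ?_ ?_).trans
    (hL (q - p))
  · intro x (hx : _ = q)
    exact ⟨by simp only; omega, eq_sub_of_add_eq hx⟩
  · rintro ⟨k, r⟩ - ⟨k', r'⟩ - h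
    simp only [Prod.mk.injEq] at h ⊢
    omega

end DifferenceMultiplicity

section Tails

lemma eventually_eq_zero_of_le_tsum_mul {b S : ℕ → ℝ} (hb0 : 0 ≤ b) (hb : Summable b)
    (hS0 : 0 ≤ S) (hS : Summable S)
    (h : ∀ᶠ k in atTop, b k ≤ (∑' r, b (r + (k + 1))) * S k) : ∀ᶠ k in atTop, b k = 0 := by
  have hsmall : ∀ᶠ N in atTop, ∑' k, S (k + N) < 1 :=
    (tendsto_sum_nat_add S).eventually (gt_mem_nhds one_pos)
  obtain ⟨N, hN⟩ := (hsmall.and (eventually_forall_ge_atTop.2 h)).exists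
  obtain ⟨hSN, hbN⟩ := hN
  have hbs (k : ℕ) : Summable fun r => b (r + k) := (summable_nat_add_iff k).2 hb
  set T := ∑' k, b (k + N)
  have hT0 : 0 ≤ T := tsum_nonneg fun _ => hb0 _
  have htail (k : ℕ) : ∑' r, b (r + (k + N + 1)) ≤ T := by
    have hsplit := (hbs N).sum_add_tsum_nat_add (k + 1)
    have hhead : 0 ≤ ∑ i ∈ Finset.range (k + 1), b (i + N) := Finset.sum_nonneg fun _ _ => hb0 _
    have hindex (r : ℕ) : b (r + (k + N + 1)) = b (r + (k + 1) + N) := by congr 1; ring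
    simp only [hindex]
    linarith
  have hT : T ≤ T * ∑' k, S (k + N) := calc
    T ≤ ∑' k, T * S (k + N) :=
      (hbs N).tsum_le_tsum (fun k => (hbN (k + N) (Nat.le_add_left _ _)).trans
        (mul_le_mul_of_nonneg_right (htail k) (hS0 _))) (((summable_nat_add_iff N).2 hS).mul_left T)
    _ = T * ∑' k, S (k + N) := tsum_mul_left
  have hTzero : T = 0 := by nlinarith
  filter_upwards [eventually_ge_atTop N] with k hk
  have hle := (hbs N).le_tsum (k - N) fun _ _ => hb0 _
  rw [Nat.sub_add_cancel hk] at hle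
  exact le_antisymm (hle.trans hTzero.le) (hb0 k)

end Tails

section Compactness

variable {𝕜 Y : Type*} [RCLike 𝕜] [NormedAddCommGroup Y] [InnerProductSpace 𝕜 Y]

lemma exists_forall_le_sum_norm_inner_sq {ι : Type*} {K : Set Y} (hK : IsCompact K) {G : ι → Y}
    (hG : ∀ u ∈ K, ∃ p, ⟪u, G p⟫_𝕜 ≠ 0) :
    ∃ t : Finset ι, ∃ δ : ℝ, 0 < δ ∧ ∀ u ∈ K, δ ≤ ∑ p ∈ t, ‖⟪u, G p⟫_𝕜‖ ^ 2 := by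
  obtain ⟨t, ht⟩ := hK.elim_finite_subcover (fun p => {u | ⟪u, G p⟫_𝕜 ≠ 0})
    (fun p => isOpen_ne_fun (by fun_prop) continuous_const) fun u hu => mem_iUnion.2 (hG u hu)
  have hpos (u : Y) (hu : u ∈ K) : 0 < ∑ p ∈ t, ‖⟪u, G p⟫_𝕜‖ ^ 2 := by
    obtain ⟨p, hp, hpu⟩ := mem_iUnion₂.1 (ht hu)
    have : 0 < ‖⟪u, G p⟫_𝕜‖ := norm_pos_iff.2 hpu
    exact Finset.sum_pos' (fun _ _ => by positivity) ⟨p, hp, by positivity⟩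
  exact ⟨t, hK.exists_forall_le' (Continuous.continuousOn (by fun_prop)) hpos⟩

end Compactness

section CompletelyRelativelyCompact

variable {Y : Type*} [NormedAddCommGroup Y] [InnerProductSpace ℂ Y]

lemma isOrthoProj_starProjection (Z : Submodule ℂ Y) [Z.HasOrthogonalProjection] :
    IsOrthoProj Z.starProjection :=
  ⟨fun x => Submodule.starProjection_eq_self_iff.2 (Submodule.starProjection_apply_mem Z x),
    Submodule.inner_starProjection_left_eq_right Z⟩

lemma exists_inner_ne_zero_of_mem_closure_span_range {ι : Type*} {G : ι → Y} {u : Y}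
    (hu : u ∈ (Submodule.span ℂ (range G)).topologicalClosure) (hu0 : u ≠ 0) :
    ∃ p, ⟪u, G p⟫_ℂ ≠ 0 := by
  by_contra! h
  have horth : u ∈ (Submodule.span ℂ (range G)).topologicalClosureᗮ := by
    rw [Submodule.orthogonal_closure, mem_orthogonal_span_iff, forall_mem_range]
    exact fun p => inner_eq_zero_symm.1 (h p)
  exact hu0 (inner_self_eq_zero.1 (horth u hu))

lemma norm_inner_inv_norm_smul_sq (x y : Y) :
    ‖⟪‖x‖⁻¹ • x, y⟫_ℂ‖ ^ 2 = ‖⟪x, y⟫_ℂ‖ ^ 2 / ‖x‖ ^ 2 := by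
  rw [inner_smul_left_eq_smul, norm_smul, norm_inv, norm_norm, mul_pow, inv_pow, inv_mul_eq_div]

lemma CRC.exists_forall_mul_norm_sq_starProjection_le {a : ℕ → Y} (ha : CRC a) {ι : Type*}
    {Z : Submodule ℂ Y} [Z.HasOrthogonalProjection] {G : ι → Y}
    (hG : ∀ u ∈ Z, u ≠ 0 → ∃ p, ⟪u, G p⟫_ℂ ≠ 0) :
    ∃ t : Finset ι, ∃ δ : ℝ, 0 < δ ∧ ∀ k,
      δ * ‖Z.starProjection (a k)‖ ^ 2 ≤ ∑ p ∈ t, ‖⟪Z.starProjection (a k), G p⟫_ℂ‖ ^ 2 := by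
  set P := Z.starProjection
  set A := {v : Y | ∃ k, P (a k) ≠ 0 ∧ v = ‖P (a k)‖⁻¹ • P (a k)}
  have hclosure : closure A ⊆ (Z : Set Y) ∩ Metric.sphere 0 1 := by
    have hZ : IsClosed (Z : Set Y) := Z.orthogonal_orthogonal ▸ Zᗮ.isClosed_orthogonal
    refine closure_minimal ?_ (hZ.inter Metric.isClosed_sphere)
    rintro _ ⟨k, hk, rfl⟩
    refine ⟨(Z.restrictScalars ℝ).smul_mem _ (Submodule.starProjection_apply_mem Z (a k)), ?_⟩
    rw [mem_sphere_zero_iff_norm, norm_smul, norm_inv, norm_norm,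
      inv_mul_cancel₀ (norm_ne_zero_iff.2 hk)]
  obtain ⟨t, δ, hδ, hle⟩ := exists_forall_le_sum_norm_inner_sq
    (ha P (isOrthoProj_starProjection Z)) fun u hu =>
      hG u (hclosure hu).1 (ne_zero_of_mem_unit_sphere ⟨u, (hclosure hu).2⟩)
  refine ⟨t, δ, hδ, fun k => ?_⟩
  obtain hk | hk := eq_or_ne (P (a k)) 0
  · simp [hk]
  have hle_k : δ ≤ ∑ p ∈ t, ‖⟪‖P (a k)‖⁻¹ • P (a k), G p⟫_ℂ‖ ^ 2 :=
    hle _ (subset_closure ⟨k, hk, rfl⟩)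
  simp only [norm_inner_inv_norm_smul_sq, ← Finset.sum_div] at hle_k
  exact (le_div_iff₀ (by positivity)).1 hle_k

end CompletelyRelativelyCompact

section LacunaryConvolution

variable {Y : Type*} [NormedAddCommGroup Y] [InnerProductSpace ℂ Y] {n : ℕ → ℕ} {a : ℕ → Y}
  {G : ℤ → Y}

lemma eventually_inner_eq_neg_tsum (hmono : StrictMono n) (hn : HasBoundedDifferenceMultiplicity n)
    (hG : ∀ᶠ p in atBot, G p = 0) (hsum : ∀ l : ℕ, HasSum (fun k => ⟪a k, G (n k - l)⟫_ℂ) 0)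
    (p : ℤ) :
    ∀ᶠ k in atTop,
      ⟪a k, G p⟫_ℂ = -∑' r, ⟪a (r + (k + 1)), G (n (r + (k + 1)) - n k + p)⟫_ℂ := by
  obtain ⟨q, hq⟩ := eventually_atBot.1 hG
  filter_upwards [hn.eventually_forall_lt_add_le hmono (p - q).natAbs,
    hmono.tendsto_atTop.eventually_ge_atTop p.natAbs] with k hgap hpk
  have hshift : (((n k - p).toNat : ℕ) : ℤ) = n k - p := Int.toNat_of_nonneg (by omega)
  have hk : HasSum (fun j => ⟪a j, G (n j - n k + p)⟫_ℂ) 0 := by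
    simpa only [hshift, sub_sub_eq_add_sub, sub_add_eq_add_sub] using hsum (n k - p).toNat
  have hpast : ∑ j ∈ Finset.range k, ⟪a j, G (n j - n k + p)⟫_ℂ = 0 :=
    Finset.sum_eq_zero fun j hj => by
      have := hgap j (Finset.mem_range.1 hj)
      rw [hq _ (by omega), inner_zero_right]
  have hsplit := hk.summable.sum_add_tsum_nat_add (k + 1)
  rw [hk.tsum_eq, Finset.sum_range_succ, hpast, zero_add, sub_self, zero_add] at hsplit
  exact eq_neg_of_add_eq_zero_left hsplit

lemma eventually_norm_inner_sq_le (hmono : StrictMono n) (hn : HasBoundedDifferenceMultiplicity n)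
    (ha : Summable fun k => ‖a k‖ ^ 2) (hG : Summable fun p => ‖G p‖ ^ 2)
    (hG0 : ∀ᶠ p in atBot, G p = 0) (hsum : ∀ l : ℕ, HasSum (fun k => ⟪a k, G (n k - l)⟫_ℂ) 0)
    (p : ℤ) :
    ∀ᶠ k in atTop, ‖⟪a k, G p⟫_ℂ‖ ^ 2 ≤
      (∑' r, ‖a (r + (k + 1))‖ ^ 2) * ∑' r, ‖G (n (r + (k + 1)) - n k + p)‖ ^ 2 := by
  filter_upwards [eventually_inner_eq_neg_tsum hmono hn hG0 hsum p] with k hk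
  rw [hk, norm_neg]
  exact norm_tsum_inner_sq_le (ha.comp_injective (add_left_injective (k + 1)))
    ((hn.summable_comp_sub_add (fun p => sq_nonneg ‖G p‖) hG p).prod_factor k)

theorem eventually_forall_inner_eq_zero [CompleteSpace Y] (hmono : StrictMono n)
    (hn : HasBoundedDifferenceMultiplicity n) (ha : Summable fun k => ‖a k‖ ^ 2)
    (hG : Summable fun p => ‖G p‖ ^ 2) (hG0 : ∀ᶠ p in atBot, G p = 0) (hcrc : CRC a)
    (hsum : ∀ l : ℕ, HasSum (fun k => ⟪a k, G (n k - l)⟫_ℂ) 0) :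
    ∀ᶠ k in atTop, ∀ p, ⟪a k, G p⟫_ℂ = 0 := by
  let Z := (Submodule.span ℂ (range G)).topologicalClosure
  let b (k : ℕ) := Z.starProjection (a k)
  let S (p : ℤ) (k : ℕ) := ∑' r, ‖G (n (r + (k + 1)) - n k + p)‖ ^ 2
  have hba (k : ℕ) (p : ℤ) : ⟪b k, G p⟫_ℂ = ⟪a k, G p⟫_ℂ :=
    Z.inner_orthogonalProjectionOnto_eq_of_mem_right
      ⟨G p, Submodule.le_topologicalClosure _ (Submodule.subset_span (mem_range_self p))⟩ (a k)
  have hb : Summable fun k => ‖b k‖ ^ 2 := ha.of_nonneg_of_le (fun _ => by positivity) fun k => by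
    gcongr
    exact Z.norm_starProjection_apply_le (a k)
  have hS (p : ℤ) : Summable (S p) :=
    (hn.summable_comp_sub_add (fun p => sq_nonneg ‖G p‖) hG p).prod
  have hest (p : ℤ) : ∀ᶠ k in atTop, ‖⟪b k, G p⟫_ℂ‖ ^ 2 ≤ (∑' r, ‖b (r + (k + 1))‖ ^ 2) * S p k :=
    eventually_norm_inner_sq_le hmono hn hb hG hG0 (by simpa only [hba] using hsum) p
  obtain ⟨t, δ, hδ, hle⟩ := hcrc.exists_forall_mul_norm_sq_starProjection_le (Z := Z)
    fun u hu hu0 => exists_inner_ne_zero_of_mem_closure_span_range hu hu0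
  have hrec : ∀ᶠ k in atTop,
      ‖b k‖ ^ 2 ≤ (∑' r, ‖b (r + (k + 1))‖ ^ 2) * (δ⁻¹ * ∑ p ∈ t, S p k) := by
    filter_upwards [(eventually_all_finset t).2 fun p _ => hest p] with k hk
    rw [mul_left_comm, le_inv_mul_iff₀ hδ, Finset.mul_sum]
    exact (hle k).trans (Finset.sum_le_sum hk)
  have hzero : ∀ᶠ k in atTop, ‖b k‖ ^ 2 = 0 := eventually_eq_zero_of_le_tsum_mul
    (fun k => sq_nonneg ‖b k‖) hb (fun k => by positivity)
    ((summable_sum fun p _ => hS p).mul_left δ⁻¹) hrec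
  filter_upwards [hzero] with k hk p
  rw [← hba, norm_eq_zero.1 (pow_eq_zero_iff two_ne_zero |>.1 hk), inner_zero_left]

end LacunaryConvolution

section BackwardShift

variable {Y : Type*} [NormedAddCommGroup Y] [InnerProductSpace ℂ Y]

lemma iterate_bshift_apply (f : H2 Y) (l j : ℕ) : (bshift^[l] f) j = f (j + l) := by
  induction l generalizing j with
  | zero => rfl
  | succ l ih =>
    rw [Function.iterate_succ_apply', ← add_assoc, add_right_comm]
    exact ih (j + 1)

lemma Ef_eq_top_iff [CompleteSpace Y] {f : H2 Y} :
    Ef f = ⊤ ↔ ∀ g, (∀ l : ℕ, ⟪bshift^[l] f, g⟫_ℂ = 0) → g = 0 := by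
  simp [Ef, EF, topologicalClosure_span_eq_top_iff]

end BackwardShift

section Realignment

variable {ι : Type*} [Fintype ι] {E : ι → Type*} [∀ i, NormedAddCommGroup (E i)]
  [∀ i, InnerProductSpace ℂ (E i)]

/-- The coefficients of `f` realigned by the shifts `m`: the `i`-th coordinate of `realign m f p` is
the coefficient of `f i` of index `p + m i`, taken to be `0` when this index is negative. -/
def realign (m : ι → ℤ) (f : H2 (PiLp 2 E)) (p : ℤ) : PiLp 2 E :=
  WithLp.toLp 2 fun i => if 0 ≤ p + m i then f (p + m i).toNat i else 0

variable {m : ι → ℤ} {f : H2 (PiLp 2 E)}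

lemma realign_apply_of_add_eq {p : ℤ} {i : ι} {k : ℕ} (h : p + m i = k) :
    realign m f p i = f k i := by
  simp [realign, h]

lemma realign_apply_of_add_neg {p : ℤ} {i : ι} (h : p + m i < 0) : realign m f p i = 0 := by
  simp [realign, h]

lemma eventually_atBot_realign_eq_zero (m : ι → ℤ) (f : H2 (PiLp 2 E)) :
    ∀ᶠ p in atBot, realign m f p = 0 := by
  filter_upwards [eventually_all.2 fun i => eventually_lt_atBot (-m i)] with p hp
  ext i
  exact realign_apply_of_add_neg (by linarith [hp i])

lemma realign_eq_zero_iff : realign m f = 0 ↔ f = 0 := by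
  refine ⟨fun h => ?_, ?_⟩
  · ext k i
    rw [← realign_apply_of_add_eq (sub_add_cancel (k : ℤ) (m i)), h]
    rfl
  · rintro rfl
    ext p i
    simp [realign]

lemma realign_eq_zero_of_notMem_range {n : ℕ → ℕ}
    (hspec : ∀ (i : ι) (k : ℕ), f k i ≠ 0 → ∃ j : ℕ, (k : ℤ) = n j + m i) {p : ℤ}
    (hp : p ∉ range fun j => (n j : ℤ)) : realign m f p = 0 := by
  ext i
  obtain h | h := lt_or_ge (p + m i) 0
  · exact realign_apply_of_add_neg h
  lift p + m i to ℕ using h with k hk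
  rw [realign_apply_of_add_eq hk.symm]
  by_contra hne
  obtain ⟨j, hj⟩ := hspec i k hne
  exact hp ⟨j, by simp only; omega⟩

lemma memℓp_two_apply (f : H2 (PiLp 2 E)) (i : ι) : Memℓp (fun k => f k i) 2 :=
  memℓp_two_iff_summable_norm_sq.2 <|
    (memℓp_two_iff_summable_norm_sq.1 (lp.memℓp f)).of_nonneg_of_le (fun _ => by positivity)
      fun k => by gcongr; exact PiLp.norm_apply_le (f k) i

lemma summable_inner_apply (f g : H2 (PiLp 2 E)) (i : ι) : Summable fun k => ⟪f k i, g k i⟫_ℂ :=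
  lp.summable_inner (⟨_, memℓp_two_apply f i⟩ : H2 (E i)) ⟨_, memℓp_two_apply g i⟩

lemma hasSum_inner_realign_apply (m : ι → ℤ) (f g : H2 (PiLp 2 E)) (l : ℕ) (i : ι) :
    HasSum (fun p : ℤ => ⟪realign m f p i, realign m g (p - l) i⟫_ℂ)
      (∑' j, ⟪(bshift^[l] f) j i, g j i⟫_ℂ) := by
  have hinj : Function.Injective fun j : ℕ => (j : ℤ) + l - m i := fun j j' h => by
    simpa using h
  have hsum := (summable_inner_apply (bshift^[l] f) g i).hasSum
  refine (hinj.hasSum_iff fun p hp => ?_).1 (hsum.congr_fun fun j => ?_)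
  · have hneg : p - l + m i < 0 := by
      by_contra! h
      exact hp ⟨(p - l + m i).toNat, by simp only; omega⟩
    rw [realign_apply_of_add_neg hneg, inner_zero_right]
  · have hf : realign m f (j + l - m i) i = f (j + l) i :=
      realign_apply_of_add_eq (by push_cast; ring)
    have hg : realign m g (j + l - m i - l) i = g j i := realign_apply_of_add_eq (by ring)
    rw [iterate_bshift_apply, Function.comp_apply, hf, hg]

theorem hasSum_inner_realign (m : ι → ℤ) (f g : H2 (PiLp 2 E)) (l : ℕ) :
    HasSum (fun p : ℤ => ⟪realign m f p, realign m g (p - l)⟫_ℂ) ⟪bshift^[l] f, g⟫_ℂ := by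
  have hinner : ⟪bshift^[l] f, g⟫_ℂ = ∑ i, ∑' j, ⟪(bshift^[l] f) j i, g j i⟫_ℂ := by
    rw [lp.inner_eq_tsum, ← Summable.tsum_finsetSum fun i _ => summable_inner_apply _ g i]
    simp only [PiLp.inner_apply]
  rw [hinner]
  simpa only [PiLp.inner_apply] using
    hasSum_sum fun i (_ : i ∈ Finset.univ) => hasSum_inner_realign_apply m f g l i

lemma summable_norm_sq_realign (m : ι → ℤ) (f : H2 (PiLp 2 E)) :
    Summable fun p => ‖realign m f p‖ ^ 2 := by
  have h := (hasSum_inner_realign m f f 0).summable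
  simp only [Nat.cast_zero, sub_zero, inner_self_eq_norm_sq_to_K] at h
  exact_mod_cast h

lemma exists_realign_eq_single {M : ℤ} (hM : ∀ i, 0 ≤ M + m i) (y : PiLp 2 E) :
    ∃ g : H2 (PiLp 2 E), realign m g = Pi.single M y := by
  let u (k : ℕ) : PiLp 2 E := WithLp.toLp 2 fun i => if (k : ℤ) = M + m i then y i else 0
  have hu : {k | u k ≠ 0}.Finite := by
    refine (finite_range fun i => (M + m i).toNat).subset fun k hk => ?_
    by_contra hne
    refine hk (PiLp.ext fun i => if_neg fun h => hne ⟨i, ?_⟩)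
    simp only [← h, Int.toNat_natCast]
  refine ⟨⟨u, (memℓp_zero hu).of_exponent_ge zero_le⟩, ?_⟩
  funext p
  ext i
  obtain rfl | hp := eq_or_ne p M
  · rw [Pi.single_eq_same, realign_apply_of_add_eq (Int.toNat_of_nonneg (hM i)).symm]
    exact if_pos (Int.toNat_of_nonneg (hM i))
  rw [Pi.single_eq_of_ne hp]
  obtain h | h := lt_or_ge (p + m i) 0
  · exact realign_apply_of_add_neg h
  · rw [realign_apply_of_add_eq (Int.toNat_of_nonneg h).symm]
    exact if_neg (by omega)

end Realignment

section Cyclicity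

variable {ι : Type*} [Fintype ι] {E : ι → Type*} [∀ i, NormedAddCommGroup (E i)]
  [∀ i, InnerProductSpace ℂ (E i)] {n : ℕ → ℕ} {m : ι → ℤ} {f g : H2 (PiLp 2 E)}

lemma hasSum_inner_realign_comp (hn : Function.Injective n)
    (hspec : ∀ (i : ι) (k : ℕ), f k i ≠ 0 → ∃ j : ℕ, (k : ℤ) = n j + m i) (g : H2 (PiLp 2 E))
    (l : ℕ) :
    HasSum (fun k => ⟪realign m f (n k), realign m g (n k - l)⟫_ℂ) ⟪bshift^[l] f, g⟫_ℂ :=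
  have hinj : Function.Injective fun k : ℕ => (n k : ℤ) := Nat.cast_injective.comp hn
  (hinj.hasSum_iff (f := fun p : ℤ => ⟪realign m f p, realign m g (p - l)⟫_ℂ) fun p hp => by
    rw [realign_eq_zero_of_notMem_range hspec hp, inner_zero_left]).2
      (hasSum_inner_realign m f g l)

theorem eq_zero_of_forall_ge_inner_realign_eq_zero (hn : Function.Injective n)
    (hspec : ∀ (i : ι) (k : ℕ), f k i ≠ 0 → ∃ j : ℕ, (k : ℤ) = n j + m i)
    (hcyc : ∀ g, (∀ l : ℕ, ⟪bshift^[l] f, g⟫_ℂ = 0) → g = 0) {N : ℕ} {y : PiLp 2 E}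
    (hy : ∀ k ≥ N, ⟪realign m f (n k), y⟫_ℂ = 0) : y = 0 := by
  obtain ⟨M, hMm, hMn⟩ : ∃ M : ℤ, (∀ i, -m i ≤ M) ∧ ∀ k ∈ Finset.range N, (n k : ℤ) < M :=
    ((eventually_all.2 fun i => eventually_ge_atTop (-m i)).and
      ((eventually_all_finset _).2 fun k _ => eventually_gt_atTop (n k : ℤ))).exists
  obtain ⟨g, hg⟩ := exists_realign_eq_single (m := m) (M := M) (fun i => by linarith [hMm i]) y
  have hg0 : g = 0 := hcyc g fun l => by
    refine (hasSum_inner_realign_comp hn hspec g l).unique ?_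
    refine hasSum_zero.congr_fun fun k => ?_
    obtain hk | hk := eq_or_ne ((n k : ℤ) - l) M
    · have hkN : N ≤ k := by
        by_contra! hlt
        have := hMn k (Finset.mem_range.2 hlt)
        omega
      rw [hg, hk, Pi.single_eq_same, hy k hkN]
    · rw [hg, Pi.single_eq_of_ne hk, inner_zero_right]
  exact (Pi.single_eq_zero_iff (i := M)).1 (hg ▸ realign_eq_zero_iff.2 hg0)

theorem eq_zero_of_forall_inner_iterate_bshift_eq_zero [∀ i, CompleteSpace (E i)]
    (hmono : StrictMono n) (hn : HasBoundedDifferenceMultiplicity n)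
    (hspec : ∀ (i : ι) (k : ℕ), f k i ≠ 0 → ∃ j : ℕ, (k : ℤ) = n j + m i)
    (hcrc : CRC fun k => realign m f (n k))
    (htail : ∀ N : ℕ, ∀ y, (∀ k ≥ N, ⟪realign m f (n k), y⟫_ℂ = 0) → y = 0)
    (hg : ∀ l : ℕ, ⟪bshift^[l] f, g⟫_ℂ = 0) : g = 0 := by
  have hinj : Function.Injective fun k => (n k : ℤ) := Nat.cast_injective.comp hmono.injective
  obtain ⟨N, hN⟩ := eventually_atTop.1 <| eventually_forall_inner_eq_zero hmono hn
    ((summable_norm_sq_realign m f).comp_injective hinj) (summable_norm_sq_realign m g)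
    (eventually_atBot_realign_eq_zero m g) hcrc
    fun l => hg l ▸ hasSum_inner_realign_comp hmono.injective hspec g l
  exact realign_eq_zero_iff.1 (funext fun p => htail N _ fun k hk => hN k hk p)

theorem shifted_lacunary_cyclic_iff_general [∀ i, CompleteSpace (E i)] (hmono : StrictMono n)
    (hn : HasBoundedDifferenceMultiplicity n)
    (hspec : ∀ (i : ι) (k : ℕ), f k i ≠ 0 → ∃ j : ℕ, (k : ℤ) = n j + m i) {v : ℕ → PiLp 2 E}
    (hv : ∀ k i, v k i = if 0 ≤ (n k : ℤ) + m i then f ((n k : ℤ) + m i).toNat i else 0)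
    (hcrc : CRC v) :
    Ef f = ⊤ ↔ ∀ N : ℕ, (Submodule.span ℂ {x | ∃ k ≥ N, x = v k}).topologicalClosure = ⊤ := by
  obtain rfl : v = fun k => realign m f (n k) := funext fun k => PiLp.ext (hv k)
  have htail (N : ℕ) :
      (Submodule.span ℂ {x | ∃ k ≥ N, x = realign m f (n k)}).topologicalClosure = ⊤ ↔
        ∀ y, (∀ k ≥ N, ⟪realign m f (n k), y⟫_ℂ = 0) → y = 0 :=
    topologicalClosure_span_eq_top_iff.trans <| forall_congr' fun y => imp_congr_left
      ⟨fun h k hk => h _ ⟨k, hk, rfl⟩, fun h _ ⟨k, hk, hx⟩ => hx ▸ h k hk⟩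
  simp only [Ef_eq_top_iff, htail]
  exact ⟨fun hcyc N y hy =>
      eq_zero_of_forall_ge_inner_realign_eq_zero hmono.injective hspec hcyc hy,
    fun htail g hg =>
      eq_zero_of_forall_inner_iterate_bshift_eq_zero hmono hn hspec hcrc htail hg⟩

end Cyclicity

/-- Cyclicity criterion for `f = (f₁, …, f_d) ∈ H²(𝔻, X^d)` with `σ(fᵢ) ⊆ (Λ + mᵢ) ∩ ℕ`,
`Λ = {nₖ}` lacunary: if the sequence `vₖ = (f̂₁(nₖ+m₁), …, f̂_d(nₖ+m_d))` is c.r.c. in `X^d`,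
then `f` is cyclic iff `closed-span {vₖ : k ≥ N} = X^d` for every `N`. -/
theorem shifted_lacunary_cyclic_iff {X : Type*} [NormedAddCommGroup X] [InnerProductSpace ℂ X] [CompleteSpace X]
    [TopologicalSpace.SeparableSpace X]
    (d : ℕ) (hd : 1 ≤ d)
    (n : ℕ → ℕ) (c : ℝ) (hc : 1 < c) (hmono : StrictMono n)
    (hlac : ∀ k, c * n k ≤ n (k + 1))
    (m : Fin d → ℤ)
    (f : H2 (PiLp 2 fun _ : Fin d => X))
    (hspec : ∀ (i : Fin d) (k : ℕ), f k i ≠ 0 → ∃ j : ℕ, (k : ℤ) = (n j : ℤ) + m i)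
    (v : ℕ → PiLp 2 fun _ : Fin d => X)
    (hv : ∀ (k : ℕ) (i : Fin d),
      v k i = if 0 ≤ (n k : ℤ) + m i then f ((n k : ℤ) + m i).toNat i else 0)
    (hcrc : CRC v) :
    Ef f = ⊤ ↔
      ∀ N : ℕ,
        (Submodule.span ℂ {x : PiLp 2 fun _ : Fin d => X |
            ∃ k ≥ N, x = v k}).topologicalClosure = ⊤ :=
  shifted_lacunary_cyclic_iff_general hmono
    (hasBoundedDifferenceMultiplicity_of_lacunary hc hmono hlac) hspec hv hcrc

end
end
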